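/- arXiv:2602.23450 — 16 statements merged into one kernel-verified Lean document; each statement's English description precedes it below -/
import Mathlib

section
/- Let K_1, K_2, K_3 be invertible 3×3 complex matrices, R_1, R_2, R_3 complex rotations, c_1, c_2, c_3 ∈ ℂ³, with fundamental matrices F_ij = (K_i)⁻ᵀ * R_i * [c_j − c_i]_× * (R_j)ᵀ * (K_j)⁻¹ and epipoles e_ij := K_i * R_i *ᵥ (c_j − c_i). Then the three triangulation conditions hold: e_13 ⬝ᵥ (F_12.mulVec e_23) = 0, e_12 ⬝ᵥ (F_13.mulVec e_32) = 0, and e_21 ⬝ᵥ (F_23.mulVec e_31) = 0. -/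
open Matrix

/-- The skew-symmetric "hat" matrix `[c]ₓ` of `c ∈ ℂ³`, so that `[c]ₓ v = c × v`. -/
def crossMat (c : Fin 3 → ℂ) : Matrix (Fin 3) (Fin 3) ℂ :=
  !![0, -c 2, c 1; c 2, 0, -c 0; -c 1, c 0, 0]

/-- The triangulation conditions hold for any compatible fundamental matrix triple.
Indices are 0-based: camera `i+1` of the paper is camera `i` here. -/
theorem stmt2 (K R : Fin 3 → Matrix (Fin 3) (Fin 3) ℂ) (c : Fin 3 → Fin 3 → ℂ)
    (hK : ∀ i, IsUnit (K i).det)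
    (hR : ∀ i, R i * (R i)ᵀ = 1) (hdR : ∀ i, (R i).det = 1)
    (F : Fin 3 → Fin 3 → Matrix (Fin 3) (Fin 3) ℂ)
    (hF : ∀ i j, F i j = ((K i)⁻¹)ᵀ * R i * crossMat (c j - c i) * (R j)ᵀ * (K j)⁻¹)
    (e : Fin 3 → Fin 3 → Fin 3 → ℂ)
    (he : ∀ i j, e i j = (K i * R i) *ᵥ (c j - c i)) :
    e 0 2 ⬝ᵥ (F 0 1 *ᵥ e 1 2) = 0 ∧
    e 0 1 ⬝ᵥ (F 0 2 *ᵥ e 2 1) = 0 ∧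
    e 1 0 ⬝ᵥ (F 1 2 *ᵥ e 2 0) = 0 := by
  have key : ∀ i j k, e i k ⬝ᵥ (F i j *ᵥ e j k) = 0 := by
    intro i j k
    have h1 : (K i * R i)ᵀ * F i j * (K j * R j) = crossMat (c j - c i) := by
      have hR' : ∀ i, (R i)ᵀ * R i = 1 := fun i => mul_eq_one_comm.mp (hR i)
      have hKi : (K i)ᵀ * ((K i)⁻¹)ᵀ = 1 := by
        rw [← Matrix.transpose_mul, Matrix.nonsing_inv_mul _ (hK i), Matrix.transpose_one]
      have hKj : (K j)⁻¹ * K j = 1 := Matrix.nonsing_inv_mul _ (hK j)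
      calc (K i * R i)ᵀ * F i j * (K j * R j)
          = (R i)ᵀ * ((K i)ᵀ * ((K i)⁻¹)ᵀ) * R i * crossMat (c j - c i) * (R j)ᵀ
              * ((K j)⁻¹ * K j) * R j := by
            rw [hF, Matrix.transpose_mul]; simp only [Matrix.mul_assoc]
        _ = ((R i)ᵀ * R i) * crossMat (c j - c i) * ((R j)ᵀ * R j) := by
            rw [hKi, hKj]; simp only [Matrix.mul_assoc, Matrix.mul_one, Matrix.one_mul]
        _ = _ := by rw [hR', hR', Matrix.one_mul, Matrix.mul_one]
    have h2 : e i k ⬝ᵥ (F i j *ᵥ e j k)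
        = (c k - c i) ⬝ᵥ (crossMat (c j - c i) *ᵥ (c k - c j)) := by
      rw [← h1, he, he]
      generalize K i * R i = A
      generalize K j * R j = B
      rw [← Matrix.mulVec_mulVec, ← Matrix.mulVec_mulVec,
        Matrix.dotProduct_mulVec (c k - c i), Matrix.vecMul_transpose]
    rw [h2]
    simp [crossMat, Matrix.mulVec, dotProduct, Fin.sum_univ_three]
    ring
  exact ⟨key 0 1 2, key 0 2 1, key 1 2 0⟩
end

section
/- Let K, K' be invertible 3×3 complex matrices, R, R' complex rotations, c, c' ∈ ℂ³, and let F = K⁻ᵀ * R * [c' − c]_× * (R')ᵀ * (K')⁻¹. Then the adjugate of F is the rank-one matrix adj(F) = (det K * det K')⁻¹ • (K' * R' * vecMulVec (c' − c) (c' − c) * Rᵀ * Kᵀ), where vecMulVec a a denotes the outer product a * aᵀ. -/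
open Matrix

theorem adj_crossMat (a : Fin 3 → ℂ) : (crossMat a).adjugate = vecMulVec a a := by
  unfold crossMat
  rw [Matrix.adjugate_fin_three_of]
  ext i j
  fin_cases i <;> fin_cases j <;> simp [vecMulVec_apply] <;> ring

theorem adj_of_inv (A B : Matrix (Fin 3) (Fin 3) ℂ) (h : A * B = 1) :
    A.adjugate = A.det • B := by
  calc A.adjugate = A.adjugate * (A * B) := by rw [h, Matrix.mul_one]
    _ = A.det • B := by
      rw [← Matrix.mul_assoc, Matrix.adjugate_mul, Matrix.smul_mul, Matrix.one_mul]

/-- The adjugate of a fundamental matrix is the stated rank-one matrix. -/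
theorem stmt3 (K K' R R' : Matrix (Fin 3) (Fin 3) ℂ)
    (hK : IsUnit K.det) (hK' : IsUnit K'.det)
    (hR : R * Rᵀ = 1) (hdR : R.det = 1)
    (hR' : R' * R'ᵀ = 1) (hdR' : R'.det = 1)
    (c c' : Fin 3 → ℂ)
    (F : Matrix (Fin 3) (Fin 3) ℂ)
    (hF : F = (K⁻¹)ᵀ * R * crossMat (c' - c) * R'ᵀ * K'⁻¹) :
    F.adjugate =
      (K.det * K'.det)⁻¹ • (K' * R' * vecMulVec (c' - c) (c' - c) * Rᵀ * Kᵀ) := by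
  have h1 := adj_of_inv K'⁻¹ K' (Matrix.nonsing_inv_mul _ hK')
  have h2 := adj_of_inv K⁻¹ K (Matrix.nonsing_inv_mul _ hK)
  have h3 := adj_of_inv R Rᵀ hR
  have h4 := adj_of_inv R' R'ᵀ hR'
  rw [hdR, one_smul] at h3
  rw [hdR', one_smul] at h4
  rw [Matrix.det_nonsing_inv, Ring.inverse_eq_inv'] at h1 h2
  subst hF
  simp only [Matrix.adjugate_mul_distrib, ← Matrix.adjugate_transpose, h1, h2, h3, h4,
    adj_crossMat, Matrix.transpose_transpose, Matrix.transpose_smul, Matrix.smul_mul,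
    Matrix.mul_smul, smul_smul, Matrix.mul_assoc, mul_inv]
  try rw [mul_comm]
end

section
/- Let K_1, K_2, K_3 be invertible 3×3 complex matrices, R_1, R_2, R_3 complex rotations, c_1, c_2, c_3 ∈ ℂ³, with fundamental matrices F_ij = (K_i)⁻ᵀ * R_i * [c_j − c_i]_× * (R_j)ᵀ * (K_j)⁻¹ for i ≠ j (so F_ji = (F_ij)ᵀ). Then the three quintic matrix constraints hold: adj(F_13) * F_12 * adj(F_32) = 0, adj(F_12) * F_13 * adj(F_23) = 0, and adj(F_21) * F_23 * adj(F_13) = 0. -/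
open Matrix

theorem adj_core (a b d : Fin 3 → ℂ) :
    (crossMat (d - a)).adjugate * crossMat (b - a) * (crossMat (b - d)).adjugate = 0 := by
  have hadj : ∀ u : Fin 3 → ℂ, (crossMat u).adjugate = Matrix.of fun i j => u i * u j := by
    intro u
    rw [crossMat, Matrix.adjugate_fin_three_of]
    ext i j
    fin_cases i <;> fin_cases j <;> simp <;> ring
  rw [hadj, hadj]
  ext i j
  simp [Matrix.mul_apply, Fin.sum_univ_three, crossMat]
  ring

theorem quintic_aux (A B D X Y Z : Matrix (Fin 3) (Fin 3) ℂ)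
    (h : X.adjugate * Y * Z.adjugate = 0) :
    (A * X * Dᵀ).adjugate * (A * Y * Bᵀ) * (D * Z * Bᵀ).adjugate = 0 := by
  simp only [Matrix.adjugate_mul_distrib]
  calc _ = Dᵀ.adjugate * (X.adjugate * ((A.adjugate * A) * Y * (Bᵀ * Bᵀ.adjugate))
            * Z.adjugate) * D.adjugate := by simp only [Matrix.mul_assoc]
    _ = 0 := by
      rw [Matrix.adjugate_mul, Matrix.mul_adjugate]
      simp only [Matrix.smul_mul, Matrix.mul_smul, Matrix.one_mul, Matrix.mul_one]
      simp [h]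

/-- The quintic constraints of equation (2.11) hold on compatible fundamental matrix
triples. Indices are 0-based: camera `i+1` of the paper is camera `i` here. -/
theorem stmt4 (K R : Fin 3 → Matrix (Fin 3) (Fin 3) ℂ) (c : Fin 3 → Fin 3 → ℂ)
    (hK : ∀ i, IsUnit (K i).det)
    (hR : ∀ i, R i * (R i)ᵀ = 1) (hdR : ∀ i, (R i).det = 1)
    (F : Fin 3 → Fin 3 → Matrix (Fin 3) (Fin 3) ℂ)
    (hF : ∀ i j, F i j = ((K i)⁻¹)ᵀ * R i * crossMat (c j - c i) * (R j)ᵀ * (K j)⁻¹) :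
    (F 0 2).adjugate * F 0 1 * (F 2 1).adjugate = 0 ∧
    (F 0 1).adjugate * F 0 2 * (F 1 2).adjugate = 0 ∧
    (F 1 0).adjugate * F 1 2 * (F 0 2).adjugate = 0 := by
  have hF' : ∀ i j, F i j =
      (((K i)⁻¹)ᵀ * R i) * crossMat (c j - c i) * (((K j)⁻¹)ᵀ * R j)ᵀ := by
    intro i j
    rw [hF, Matrix.transpose_mul, Matrix.transpose_transpose]
    simp only [Matrix.mul_assoc]
  have key : ∀ i j k, (F i k).adjugate * F i j * (F k j).adjugate = 0 := by
    intro i j k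
    rw [hF' i k, hF' i j, hF' k j]
    exact quintic_aux _ _ _ _ _ _ (adj_core _ _ _)
  exact ⟨key 0 1 2, key 0 2 1, key 1 2 0⟩
end

section
/- Let K_1, K_2, K_3 be invertible 3×3 complex matrices, R_1, R_2, R_3 complex rotations, c_1, c_2, c_3 ∈ ℂ³, with fundamental matrices F_ij = (K_i)⁻ᵀ * R_i * [c_j − c_i]_× * (R_j)ᵀ * (K_j)⁻¹ for i ≠ j (so F_ji = (F_ij)ᵀ). Then the three quartic matrix constraints hold: F_12 * adj(F_32) * F_31 = F_13 * adj(F_23) * F_21, F_31 * adj(F_21) * F_23 = F_32 * adj(F_12) * F_13, and F_21 * adj(F_31) * F_32 = F_23 * adj(F_13) * F_12. Equivalently, for every permutation (i,j,k) of (1,2,3) the matrix F_ij * adj(F_kj) * F_ki is symmetric. -/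
open Matrix

theorem crossMat_tr (a b : Fin 3 → ℂ) : (crossMat (a - b))ᵀ = crossMat (b - a) := by
  ext i j
  fin_cases i <;> fin_cases j <;> simp [crossMat]

theorem crossMat_sym (a b d : Fin 3 → ℂ) :
    (crossMat (b - a) * (crossMat (b - d)).adjugate * crossMat (a - d))ᵀ =
      crossMat (b - a) * (crossMat (b - d)).adjugate * crossMat (a - d) := by
  ext i j
  fin_cases i <;> fin_cases j <;>
    simp [crossMat, Matrix.adjugate_fin_three, Matrix.mul_apply, Fin.sum_univ_three] <;> ring

theorem quartic_form (A B D X Y Z : Matrix (Fin 3) (Fin 3) ℂ) :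
    (A * X * Bᵀ) * (D * Y * Bᵀ).adjugate * (D * Z * Aᵀ) =
      (B.det * D.det) • (A * (X * Y.adjugate * Z) * Aᵀ) := by
  have h1 : (A * X * Bᵀ) * (D * Y * Bᵀ).adjugate * (D * Z * Aᵀ) =
      A * X * (Bᵀ * Bᵀ.adjugate) * Y.adjugate * (D.adjugate * D) * Z * Aᵀ := by
    simp only [Matrix.adjugate_mul_distrib, Matrix.mul_assoc]
  rw [h1, Matrix.mul_adjugate, Matrix.adjugate_mul, Matrix.det_transpose]
  simp [Matrix.mul_assoc, smul_smul, mul_comm]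

/-- The new quartic constraints (3.1)/(3.2) hold on compatible fundamental matrix
triples, and equivalently `F_ij ⬝ adj(F_kj) ⬝ F_ki` is symmetric for every
permutation `(i,j,k)` of the three cameras.
Indices are 0-based: camera `i+1` of the paper is camera `i` here. -/
theorem stmt5 (K R : Fin 3 → Matrix (Fin 3) (Fin 3) ℂ) (c : Fin 3 → Fin 3 → ℂ)
    (hK : ∀ i, IsUnit (K i).det)
    (hR : ∀ i, R i * (R i)ᵀ = 1) (hdR : ∀ i, (R i).det = 1)
    (F : Fin 3 → Fin 3 → Matrix (Fin 3) (Fin 3) ℂ)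
    (hF : ∀ i j, F i j = ((K i)⁻¹)ᵀ * R i * crossMat (c j - c i) * (R j)ᵀ * (K j)⁻¹) :
    (F 0 1 * (F 2 1).adjugate * F 2 0 = F 0 2 * (F 1 2).adjugate * F 1 0) ∧
    (F 2 0 * (F 1 0).adjugate * F 1 2 = F 2 1 * (F 0 1).adjugate * F 0 2) ∧
    (F 1 0 * (F 2 0).adjugate * F 2 1 = F 1 2 * (F 0 2).adjugate * F 0 1) ∧
    (∀ i j k : Fin 3, i ≠ j → j ≠ k → i ≠ k →
      (F i j * (F k j).adjugate * F k i)ᵀ = F i j * (F k j).adjugate * F k i) := by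
  have hF' : ∀ i j, F i j = (((K i)⁻¹)ᵀ * R i) * crossMat (c j - c i) *
      (((K j)⁻¹)ᵀ * R j)ᵀ := by
    intro i j
    rw [hF i j, Matrix.transpose_mul, Matrix.transpose_transpose]
    simp only [Matrix.mul_assoc]
  have hT : ∀ i j, (F i j)ᵀ = F j i := by
    intro i j
    rw [hF' i j, hF' j i, ← crossMat_tr (c j) (c i)]
    simp only [Matrix.transpose_mul, Matrix.transpose_transpose, Matrix.mul_assoc]
  have hS : ∀ i j k, (F i j * (F k j).adjugate * F k i)ᵀ =
      F i j * (F k j).adjugate * F k i := by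
    intro i j k
    rw [hF' i j, hF' k j, hF' k i, quartic_form, Matrix.transpose_smul,
      Matrix.transpose_mul _ (_)ᵀ, Matrix.transpose_mul _ (_ * _ * crossMat _),
      crossMat_sym, Matrix.transpose_transpose]
    simp only [Matrix.mul_assoc]
  have hQ : ∀ i j k, F i j * (F k j).adjugate * F k i =
      F i k * (F j k).adjugate * F j i := by
    intro i j k
    rw [← hS i j k, Matrix.transpose_mul, Matrix.transpose_mul, Matrix.adjugate_transpose,
      hT, hT, hT, Matrix.mul_assoc]
  exact ⟨hQ 0 1 2, hQ 2 0 1, hQ 1 0 2, fun i j k _ _ _ => hS i j k⟩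
end

section
/- Let K_1, K_2, K_3 be invertible 3×3 complex matrices, R_1, R_2, R_3 complex rotations, c_1, c_2, c_3 ∈ ℂ³, and u_ij = u_ji ∈ ℂ arbitrary scalars. Let F be the 9×9 complex matrix, indexed by (Fin 3) × (Fin 3), whose 3×3 block in position (i,j) is u_ij • ((K_i)⁻ᵀ * R_i * [c_j − c_i]_× * (R_j)ᵀ * (K_j)⁻¹) for i ≠ j, and whose diagonal blocks are zero. Then F has rank at most 6. -/
open Matrix

theorem aux_f (n w : Fin 3 → ℂ) (hn : n ≠ 0) (h : n 0 * w 0 + n 1 * w 1 + n 2 * w 2 = 0) :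
    ∃ f : Fin 3 → ℂ, crossMat w = vecMulVec f n - vecMulVec n f := by
  suffices ∃ f : Fin 3 → ℂ, w 0 = n 1 * f 2 - n 2 * f 1 ∧ w 1 = n 2 * f 0 - n 0 * f 2 ∧
      w 2 = n 0 * f 1 - n 1 * f 0 by
    obtain ⟨f, h0, h1, h2⟩ := this
    refine ⟨f, ?_⟩
    ext i j
    fin_cases i <;> fin_cases j <;> simp [crossMat, vecMulVec_apply, h0, h1, h2] <;> ring
  by_cases h2 : n 2 = 0
  · by_cases h1 : n 1 = 0
    · have h0 : n 0 ≠ 0 := by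
        intro h0
        apply hn
        ext i
        fin_cases i <;> simp [h0, h1, h2]
      refine ⟨![0, w 2 / n 0, -w 1 / n 0], ?_, ?_, ?_⟩ <;> simp <;> field_simp <;>
        linear_combination h
    · refine ⟨![-w 2 / n 1, 0, w 0 / n 1], ?_, ?_, ?_⟩ <;> simp <;> field_simp <;>
        linear_combination h
  · refine ⟨![w 1 / n 2, -w 0 / n 2, 0], ?_, ?_, ?_⟩ <;> simp <;> field_simp <;>
      linear_combination h

theorem aux_n (c : Fin 3 → Fin 3 → ℂ) : ∃ n : Fin 3 → ℂ, n ≠ 0 ∧ ∀ i j,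
    n 0 * (c j - c i) 0 + n 1 * (c j - c i) 1 + n 2 * (c j - c i) 2 = 0 := by
  obtain ⟨n, hn, h⟩ := (Matrix.exists_mulVec_eq_zero_iff
    (M := (Matrix.of ![c 1 - c 0, c 2 - c 0, 0] : Matrix (Fin 3) (Fin 3) ℂ))).2
    (by simp [Matrix.det_fin_three])
  refine ⟨n, hn, ?_⟩
  have h0 := congrFun h 0
  have h1 := congrFun h 1
  simp [mulVec, dotProduct, Fin.sum_univ_three] at h0 h1
  intro i j
  fin_cases i <;> fin_cases j <;> simp
  · linear_combination h0
  · linear_combination h1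
  · linear_combination -h0
  · linear_combination h1 - h0
  · linear_combination -h1
  · linear_combination h0 - h1

/-- Proposition 2.2 (Sengupta et al.): the 9×9 block matrix of arbitrarily scaled
fundamental matrices of a camera triple has rank at most 6.
Indices are 0-based: camera `i+1` of the paper is camera `i` here. -/
theorem stmt6 (K R : Fin 3 → Matrix (Fin 3) (Fin 3) ℂ) (c : Fin 3 → Fin 3 → ℂ)
    (hK : ∀ i, IsUnit (K i).det)
    (hR : ∀ i, R i * (R i)ᵀ = 1) (hdR : ∀ i, (R i).det = 1)
    (u : Fin 3 → Fin 3 → ℂ) (hu : ∀ i j, u i j = u j i)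
    (F : Matrix (Fin 3 × Fin 3) (Fin 3 × Fin 3) ℂ)
    (hF : ∀ p q, F p q =
      if p.1 = q.1 then 0 else
        (u p.1 q.1 •
          (((K p.1)⁻¹)ᵀ * R p.1 * crossMat (c q.1 - c p.1) * (R q.1)ᵀ * (K q.1)⁻¹))
          p.2 q.2) :
    F.rank ≤ 6 := by
  obtain ⟨n, hn, hnc⟩ := aux_n c
  choose f hf using fun i j => aux_f n (c j - c i) hn (hnc i j)
  let P : Fin 3 → Matrix (Fin 3) (Fin 3) ℂ := fun i => ((K i)⁻¹)ᵀ * R i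
  have key : ∀ i j, ((K i)⁻¹)ᵀ * R i * crossMat (c j - c i) * (R j)ᵀ * (K j)⁻¹ =
      vecMulVec (P i *ᵥ f i j) (P j *ᵥ n) - vecMulVec (P i *ᵥ n) (P j *ᵥ f i j) := by
    intro i j
    have e : (R j)ᵀ * (K j)⁻¹ = (P j)ᵀ := by simp [P, Matrix.transpose_mul]
    rw [Matrix.mul_assoc _ (R j)ᵀ, e, hf, Matrix.mul_sub, Matrix.sub_mul]
    simp only [Matrix.mul_vecMulVec, Matrix.vecMulVec_mul, Matrix.vecMul_transpose, P]
  let A : Matrix (Fin 3 × Fin 3) (Fin 3) ℂ := fun p k => if p.1 = k then (P k *ᵥ n) p.2 else 0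
  let X : Matrix (Fin 3) (Fin 3 × Fin 3) ℂ := fun k q =>
    if k = q.1 then 0 else - u k q.1 * (P q.1 *ᵥ f k q.1) q.2
  let Y : Matrix (Fin 3 × Fin 3) (Fin 3) ℂ := fun p k =>
    if p.1 = k then 0 else u p.1 k * (P p.1 *ᵥ f p.1 k) p.2
  have hFe : F = A * X + Y * Aᵀ := by
    ext p q
    rw [hF, key]
    have e1 : (A * X) p q = (P p.1 *ᵥ n) p.2 * X p.1 q := by
      rw [Matrix.mul_apply, Finset.sum_eq_single p.1]
      · simp [A]
      · intro b _ hb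
        simp [A, hb.symm]
      · simp
    have e2 : (Y * Aᵀ) p q = Y p q.1 * (P q.1 *ᵥ n) q.2 := by
      rw [Matrix.mul_apply, Finset.sum_eq_single q.1]
      · rw [Matrix.transpose_apply]
        simp [A]
      · intro b _ hb
        rw [Matrix.transpose_apply]
        simp [A, hb.symm]
      · simp
    rw [Matrix.add_apply, e1, e2]
    simp only [X, Y]
    split_ifs with h
    · simp
    · simp only [Matrix.smul_apply, Matrix.sub_apply, vecMulVec_apply, smul_eq_mul]
      ring
  rw [hFe, ← Matrix.fromCols_mul_fromRows]
  exact (Matrix.rank_mul_le_left _ _).trans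
    (by simpa using Matrix.rank_le_card_width (Matrix.fromCols A Y))
end

section
/- Let c_1, c_2, c_3 ∈ ℂ³ and u_ij = u_ji ∈ ℂ be arbitrary scalars, and let M be the 9×9 complex matrix, indexed by (Fin 3) × (Fin 3), whose (i,j) block is u_ij • [c_j − c_i]_× (diagonal blocks are automatically zero). Then the three vectors of ℂ⁹ written in blocks as v₁ = (u_23 • (c_2 − c_1), u_13 • (c_1 − c_2), 0), v₂ = (u_23 • (c_3 − c_1), 0, u_12 • (c_1 − c_3)), v₃ = (0, u_13 • (c_3 − c_2), u_12 • (c_2 − c_3)) satisfy M.mulVec v₁ = 0, M.mulVec v₂ = 0, and M.mulVec v₃ = 0. -/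
open Matrix

/-- The kernel vectors (2.14) of the 9×9 matrix of scaled hat matrices of the
camera centers. Indices are 0-based: camera `i+1` of the paper is camera `i` here,
so `u 1 2 = u_23`, `u 0 2 = u_13`, `u 0 1 = u_12`. -/
theorem stmt8 (c : Fin 3 → Fin 3 → ℂ)
    (u : Fin 3 → Fin 3 → ℂ) (hu : ∀ i j, u i j = u j i)
    (M : Matrix (Fin 3 × Fin 3) (Fin 3 × Fin 3) ℂ)
    (hM : ∀ p q, M p q = (u p.1 q.1 • crossMat (c q.1 - c p.1)) p.2 q.2)
    (v₁ v₂ v₃ : Fin 3 × Fin 3 → ℂ)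
    (hv₁ : v₁ = fun p => ![u 1 2 • (c 1 - c 0), u 0 2 • (c 0 - c 1), 0] p.1 p.2)
    (hv₂ : v₂ = fun p => ![u 1 2 • (c 2 - c 0), 0, u 0 1 • (c 0 - c 2)] p.1 p.2)
    (hv₃ : v₃ = fun p => ![0, u 0 2 • (c 2 - c 1), u 0 1 • (c 1 - c 2)] p.1 p.2) :
    M *ᵥ v₁ = 0 ∧ M *ᵥ v₂ = 0 ∧ M *ᵥ v₃ = 0 := by
  have h1 := hu 1 0
  have h2 := hu 2 0
  have h3 := hu 2 1
  subst hv₁ hv₂ hv₃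
  refine ⟨?_, ?_, ?_⟩ <;>
  · ext ⟨i, k⟩
    fin_cases i <;> fin_cases k <;>
    · simp [Matrix.mulVec, dotProduct, Fintype.sum_prod_type, Fin.sum_univ_three, hM, crossMat,
        h1, h2, h3]
      try ring
end

section
/- Let c_1, c_2, c_3 ∈ ℂ³ be such that c_2 − c_1 and c_3 − c_1 are linearly independent, and let u_12, u_13, u_23 ∈ ℂ be nonzero. Then the three vectors of ℂ⁹ written in blocks as v₁ = (u_23 • (c_2 − c_1), u_13 • (c_1 − c_2), 0), v₂ = (u_23 • (c_3 − c_1), 0, u_12 • (c_1 − c_3)), v₃ = (0, u_13 • (c_3 − c_2), u_12 • (c_2 − c_3)) are linearly independent over ℂ. -/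
open Matrix

/-- If the camera centers are noncollinear and the scalings are nonzero, the three
kernel vectors (2.14) are linearly independent over ℂ.
Indices are 0-based: camera `i+1` of the paper is camera `i` here. -/
theorem stmt9 (c : Fin 3 → Fin 3 → ℂ)
    (hc : LinearIndependent ℂ ![c 1 - c 0, c 2 - c 0])
    (u12 u13 u23 : ℂ) (hu12 : u12 ≠ 0) (hu13 : u13 ≠ 0) (hu23 : u23 ≠ 0)
    (v₁ v₂ v₃ : Fin 3 × Fin 3 → ℂ)
    (hv₁ : v₁ = fun p => ![u23 • (c 1 - c 0), u13 • (c 0 - c 1), 0] p.1 p.2)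
    (hv₂ : v₂ = fun p => ![u23 • (c 2 - c 0), 0, u12 • (c 0 - c 2)] p.1 p.2)
    (hv₃ : v₃ = fun p => ![0, u13 • (c 2 - c 1), u12 • (c 1 - c 2)] p.1 p.2) :
    LinearIndependent ℂ ![v₁, v₂, v₃] := by
  rw [LinearIndependent.pair_iff] at hc
  rw [Fintype.linearIndependent_iff]
  intro g hg
  have h0 : ∀ j, u23 * (g 0 * (c 1 j - c 0 j) + g 1 * (c 2 j - c 0 j)) = 0 := by
    intro j
    have := congrFun hg (0, j)
    simp [Fin.sum_univ_three, hv₁, hv₂, hv₃] at this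
    linear_combination this
  have h1 : ∀ j, u13 * ((-g 0 - g 2) * (c 1 j - c 0 j) + g 2 * (c 2 j - c 0 j)) = 0 := by
    intro j
    have := congrFun hg (1, j)
    simp [Fin.sum_univ_three, hv₁, hv₂, hv₃] at this
    linear_combination this
  have e0 := hc (g 0) (g 1) (by
    ext j
    simpa [hu23] using h0 j)
  have e1 := hc (-g 0 - g 2) (g 2) (by
    ext j
    simpa [hu13] using h1 j)
  intro i
  fin_cases i
  · exact e0.1
  · exact e0.2
  · exact e1.2
end

section
/- Let K_1, K_2, K_3 be invertible 3×3 complex matrices, R_1, R_2, R_3 complex rotations, c_1, c_2, c_3 ∈ ℂ³, with fundamental matrices F_ij = (K_i)⁻ᵀ * R_i * [c_j − c_i]_× * (R_j)ᵀ * (K_j)⁻¹ and epipole e_23 := K_2 * R_2 *ᵥ (c_3 − c_2). Then the epipolar line F_12.mulVec e_23 lies in the column space of F_13; that is, there exists v ∈ ℂ³ with F_13.mulVec v = F_12.mulVec e_23. -/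
open Matrix

/-- Geometric interpretation of the quartics: the epipolar line `F_12 e_23` lies in
the column space of `F_13`. Indices are 0-based: camera `i+1` of the paper is
camera `i` here. -/
theorem stmt10 (K R : Fin 3 → Matrix (Fin 3) (Fin 3) ℂ) (c : Fin 3 → Fin 3 → ℂ)
    (hK : ∀ i, IsUnit (K i).det)
    (hR : ∀ i, R i * (R i)ᵀ = 1) (hdR : ∀ i, (R i).det = 1)
    (F : Fin 3 → Fin 3 → Matrix (Fin 3) (Fin 3) ℂ)
    (hF : ∀ i j, F i j = ((K i)⁻¹)ᵀ * R i * crossMat (c j - c i) * (R j)ᵀ * (K j)⁻¹)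
    (e23 : Fin 3 → ℂ) (he23 : e23 = (K 1 * R 1) *ᵥ (c 2 - c 1)) :
    ∃ v : Fin 3 → ℂ, F 0 2 *ᵥ v = F 0 1 *ᵥ e23 := by
  have key : ∀ j, (F 0 j) *ᵥ ((K j * R j) *ᵥ (c 2 - c 1))
      = (((K 0)⁻¹)ᵀ * R 0) *ᵥ (crossMat (c j - c 0) *ᵥ (c 2 - c 1)) := by
    intro j
    have h1 : (K j)⁻¹ * K j = 1 := Matrix.nonsing_inv_mul _ (hK j)
    have h2 : (R j)ᵀ * R j = 1 := mul_eq_one_comm.mp (hR j)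
    rw [hF, Matrix.mulVec_mulVec, Matrix.mulVec_mulVec]
    congr 1
    calc ((K 0)⁻¹)ᵀ * R 0 * crossMat (c j - c 0) * (R j)ᵀ * (K j)⁻¹ * (K j * R j)
        = ((K 0)⁻¹)ᵀ * R 0 * crossMat (c j - c 0) * ((R j)ᵀ * (((K j)⁻¹ * K j) * R j)) := by
          simp only [Matrix.mul_assoc]
      _ = _ := by rw [h1, Matrix.one_mul, h2, Matrix.mul_one]
  refine ⟨(K 2 * R 2) *ᵥ (c 2 - c 1), ?_⟩
  rw [he23, key, key]
  congr 1
  ext i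
  fin_cases i <;> simp [crossMat, Matrix.mulVec, dotProduct, Fin.sum_univ_three] <;> ring
end

section
/- Let R be a 3×3 complex matrix with R * Rᵀ = 1 and let c ∈ ℂ³. Then the essential matrix E = [c]_× * Rᵀ satisfies the Demazure cubics: 2 • (E * Eᵀ * E) − trace(E * Eᵀ) • E = 0. -/
open Matrix

/-- The Demazure cubics hold for every essential matrix `E = [c]ₓ Rᵀ`. -/
theorem stmt11 (R : Matrix (Fin 3) (Fin 3) ℂ) (hR : R * Rᵀ = 1) (c : Fin 3 → ℂ)
    (E : Matrix (Fin 3) (Fin 3) ℂ) (hE : E = crossMat c * Rᵀ) :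
    2 • (E * Eᵀ * E) - (E * Eᵀ).trace • E = 0 := by
  have hR' : Rᵀ * R = 1 := mul_eq_one_comm.mp hR
  have key : E * Eᵀ = crossMat c * (crossMat c)ᵀ := by
    rw [hE, Matrix.transpose_mul, Matrix.transpose_transpose, Matrix.mul_assoc,
      ← Matrix.mul_assoc Rᵀ, hR', Matrix.one_mul]
  have h2 : 2 • (crossMat c * (crossMat c)ᵀ * crossMat c)
      - (crossMat c * (crossMat c)ᵀ).trace • crossMat c = 0 := by
    ext i j
    fin_cases i <;> fin_cases j <;>
      (simp only [Matrix.sub_apply, Matrix.smul_apply, Matrix.mul_apply, Matrix.trace,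
        Matrix.diag_apply, Matrix.transpose_apply, Fin.sum_univ_three, Matrix.zero_apply]
       simp [crossMat]
       try ring)
  have h3 := congrArg (fun M => M * Rᵀ) h2
  simp only [Matrix.sub_mul, Matrix.smul_mul, Matrix.zero_mul] at h3
  rw [key, hE, ← Matrix.mul_assoc]
  exact h3
end

section
/- Let R_1, R_2, R_3 be complex rotations and c_1, c_2, c_3 ∈ ℂ³, with essential matrices E_ij = R_i * [c_j − c_i]_× * (R_j)ᵀ for all i ≠ j (so E_ji = (E_ij)ᵀ). Then trace(E_12 * E_23 * E_31) = 0. -/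
open Matrix

/-- Martyushev's cubic constraint (2.16): `trace(E_12 E_23 E_31) = 0` for compatible
essential matrix triples. Indices are 0-based: camera `i+1` of the paper is
camera `i` here. -/
theorem stmt12 (R : Fin 3 → Matrix (Fin 3) (Fin 3) ℂ) (c : Fin 3 → Fin 3 → ℂ)
    (hR : ∀ i, R i * (R i)ᵀ = 1) (hdR : ∀ i, (R i).det = 1)
    (E : Fin 3 → Fin 3 → Matrix (Fin 3) (Fin 3) ℂ)
    (hE : ∀ i j, E i j = R i * crossMat (c j - c i) * (R j)ᵀ) :
    (E 0 1 * E 1 2 * E 2 0).trace = 0 := by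
  have h : ∀ i, (R i)ᵀ * R i = 1 := fun i => mul_eq_one_comm.mp (hR i)
  have key : E 0 1 * E 1 2 * E 2 0 = R 0 * (crossMat (c 1 - c 0) * crossMat (c 2 - c 1) *
      crossMat (c 0 - c 2) * (R 0)ᵀ) := by
    rw [hE, hE, hE]
    calc _ = R 0 * crossMat (c 1 - c 0) * ((R 1)ᵀ * R 1) * crossMat (c 2 - c 1) *
          ((R 2)ᵀ * R 2) * crossMat (c 0 - c 2) * (R 0)ᵀ := by simp only [Matrix.mul_assoc]
      _ = _ := by rw [h, h]; simp only [Matrix.mul_assoc, Matrix.one_mul]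
  rw [key, Matrix.trace_mul_comm, Matrix.mul_assoc, h, Matrix.mul_one]
  simp [crossMat, Matrix.trace, Fin.sum_univ_three, Matrix.mul_apply]
  ring
end

section
/- Let R_1, R_2, R_3 be complex rotations and c_1, c_2, c_3 ∈ ℂ³, with essential matrices E_ij = R_i * [c_j − c_i]_× * (R_j)ᵀ for all i ≠ j (so E_ji = (E_ij)ᵀ). Then for all pairwise distinct i, j, k ∈ {1,2,3}: (E_ij)ᵀ * E_ij * E_jk − (1/2 : ℂ) * trace((E_ij)ᵀ * E_ij) • E_jk + adj(E_ij) * (E_ki)ᵀ = 0. -/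
open Matrix

lemma crossMat_key (x y z : Fin 3 → ℂ) :
    (crossMat (y - x))ᵀ * crossMat (y - x) * crossMat (z - y)
      - ((1 / 2 : ℂ) * ((crossMat (y - x))ᵀ * crossMat (y - x)).trace) • crossMat (z - y)
      + (crossMat (y - x)).adjugate * (crossMat (x - z))ᵀ = 0 := by
  ext i j
  fin_cases i <;> fin_cases j <;>
    simp [crossMat, Matrix.adjugate_fin_three, Matrix.mul_apply, Fin.sum_univ_three,
      Matrix.trace_fin_three, Matrix.vecMul, dotProduct] <;> ring

lemma adj_rot (R : Matrix (Fin 3) (Fin 3) ℂ) (h : R * Rᵀ = 1) (hd : R.det = 1) :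
    R.adjugate = Rᵀ := by
  have h1 : R.adjugate * R = 1 := by rw [Matrix.adjugate_mul, hd, one_smul]
  calc R.adjugate = R.adjugate * (R * Rᵀ) := by rw [h, mul_one]
    _ = Rᵀ := by rw [← mul_assoc, h1, one_mul]

/-- Martyushev's necessary condition (2.17) for compatible essential matrix triples.
Indices are 0-based: camera `i+1` of the paper is camera `i` here. -/
theorem stmt13 (R : Fin 3 → Matrix (Fin 3) (Fin 3) ℂ) (c : Fin 3 → Fin 3 → ℂ)
    (hR : ∀ i, R i * (R i)ᵀ = 1) (hdR : ∀ i, (R i).det = 1)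
    (E : Fin 3 → Fin 3 → Matrix (Fin 3) (Fin 3) ℂ)
    (hE : ∀ i j, E i j = R i * crossMat (c j - c i) * (R j)ᵀ) :
    ∀ i j k : Fin 3, i ≠ j → j ≠ k → i ≠ k →
      (E i j)ᵀ * E i j * E j k
        - ((1 / 2 : ℂ) * ((E i j)ᵀ * E i j).trace) • E j k
        + (E i j).adjugate * (E k i)ᵀ = 0 := by
  intro i j k _ _ _
  have hT : ∀ i, (R i)ᵀ * R i = 1 := fun i => mul_eq_one_comm.mp (hR i)
  have hT' : ∀ i (M : Matrix (Fin 3) (Fin 3) ℂ), (R i)ᵀ * (R i * M) = M := fun i M => by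
    rw [← mul_assoc, hT, one_mul]
  have key := crossMat_key (c i) (c j) (c k)
  have hadj : (E i j).adjugate = R j * (crossMat (c j - c i)).adjugate * (R i)ᵀ := by
    rw [hE, Matrix.adjugate_mul_distrib, Matrix.adjugate_mul_distrib, ← Matrix.adjugate_transpose,
      adj_rot _ (hR i) (hdR i), adj_rot _ (hR j) (hdR j), transpose_transpose, mul_assoc]
  have h1 : (E i j)ᵀ * E i j
      = R j * ((crossMat (c j - c i))ᵀ * crossMat (c j - c i)) * (R j)ᵀ := by
    simp only [hE, transpose_mul, transpose_transpose, mul_assoc, hT']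
  have htr : ((E i j)ᵀ * E i j).trace
      = ((crossMat (c j - c i))ᵀ * crossMat (c j - c i)).trace := by
    rw [h1, Matrix.trace_mul_comm, ← mul_assoc, hT, one_mul]
  rw [htr, h1, hadj, hE j k, hE k i]
  have := congrArg (fun M => R j * M * (R k)ᵀ) key
  simp only [mul_add, mul_sub, add_mul, sub_mul, mul_zero, zero_mul, mul_smul_comm,
    smul_mul_assoc, mul_assoc] at this
  simp only [transpose_mul, transpose_transpose, mul_assoc, hT']
  exact this
end

section
/- Let R_1, R_2, R_3 be complex rotations and c_1, c_2, c_3 ∈ ℂ³, with essential matrices E_ij = R_i * [c_j − c_i]_× * (R_j)ᵀ for i ≠ j (so E_ji = (E_ij)ᵀ). Let F be the 9×9 complex matrix, indexed by (Fin 3) × (Fin 3), whose (i,j) block is E_ij for i ≠ j and whose diagonal blocks are zero. Then trace(F^2)^2 − 16 * trace(F^4) + 24 * (trace((E_12)ᵀ * E_12)^2 + trace((E_13)ᵀ * E_13)^2 + trace((E_23)ᵀ * E_23)^2) = 0. -/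
open Matrix

/-- The block matrix with the rotations stripped off. -/
def crossBlock (c : Fin 3 → Fin 3 → ℂ) : Matrix (Fin 3 × Fin 3) (Fin 3 × Fin 3) ℂ :=
  fun p q => crossMat (c q.1 - c p.1) p.2 q.2

def rotBlock (R : Fin 3 → Matrix (Fin 3) (Fin 3) ℂ) :
    Matrix (Fin 3 × Fin 3) (Fin 3 × Fin 3) ℂ :=
  fun p q => if p.1 = q.1 then R p.1 p.2 q.2 else 0

lemma crossMat_zero' : crossMat 0 = 0 := by
  ext i j
  fin_cases i <;> fin_cases j <;> simp [crossMat]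

lemma rotBlock_orth (R : Fin 3 → Matrix (Fin 3) (Fin 3) ℂ)
    (hR : ∀ i, R i * (R i)ᵀ = 1) : (rotBlock R)ᵀ * rotBlock R = 1 := by
  ext ⟨i, a⟩ ⟨j, b⟩
  have h : (R i)ᵀ * R i = 1 := mul_eq_one_comm.mp (hR i)
  have h2 := congrFun (congrFun h a) b
  simp only [mul_apply, transpose_apply] at h2
  simp only [mul_apply, transpose_apply, rotBlock, Fintype.sum_prod_type, ite_mul, zero_mul,
    mul_ite, mul_zero, Matrix.one_apply, Prod.mk.injEq] at *
  by_cases hij : i = j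
  · subst hij
    simp only [true_and, ← h2]
    rw [Finset.sum_eq_single i]
    · simp
    · intro k _ hk; simp [hk]
    · simp
  · simp only [hij, false_and, if_false]
    refine Finset.sum_eq_zero fun k _ => Finset.sum_eq_zero fun l _ => ?_
    by_cases h1 : k = i
    · subst h1; simp [hij]
    · simp [h1]

lemma conj_trace (D S : Matrix (Fin 3 × Fin 3) (Fin 3 × Fin 3) ℂ) (h : Dᵀ * D = 1) (n : ℕ) :
    ((D * S * Dᵀ) ^ n).trace = (S ^ n).trace := by
  have h' : D * Dᵀ = 1 := mul_eq_one_comm.mp h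
  have : (D * S * Dᵀ) ^ n = D * S ^ n * Dᵀ := by
    induction n with
    | zero => simp [h']
    | succ k ih =>
      rw [pow_succ, ih, pow_succ]
      calc D * S ^ k * Dᵀ * (D * S * Dᵀ) = D * S ^ k * (Dᵀ * D) * S * Dᵀ := by
            simp only [Matrix.mul_assoc]
        _ = _ := by rw [h]; simp only [Matrix.mul_assoc, Matrix.one_mul]
  rw [this, Matrix.trace_mul_comm, ← Matrix.mul_assoc, h, Matrix.one_mul]

lemma trace_E (R R' S : Matrix (Fin 3) (Fin 3) ℂ) (h : R * Rᵀ = 1) (h' : R' * R'ᵀ = 1) :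
    ((R * S * R'ᵀ)ᵀ * (R * S * R'ᵀ)).trace = (Sᵀ * S).trace := by
  have h1 : Rᵀ * R = 1 := mul_eq_one_comm.mp h
  have h2 : R'ᵀ * R' = 1 := mul_eq_one_comm.mp h'
  have : (R * S * R'ᵀ)ᵀ * (R * S * R'ᵀ) = R' * (Sᵀ * S * R'ᵀ) := by
    simp only [transpose_mul, transpose_transpose]
    calc _ = R' * (Sᵀ * (Rᵀ * R) * S * R'ᵀ) := by simp only [Matrix.mul_assoc]
      _ = _ := by rw [h1, Matrix.mul_one]
  rw [this, Matrix.trace_mul_comm, Matrix.mul_assoc, h2, Matrix.mul_one]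

lemma trace_cross (v : Fin 3 → ℂ) :
    ((crossMat v)ᵀ * crossMat v).trace = 2 * (v 0 ^ 2 + v 1 ^ 2 + v 2 ^ 2) := by
  simp [Matrix.trace, Fin.sum_univ_three, mul_apply, crossMat]
  ring

lemma F_eq (R : Fin 3 → Matrix (Fin 3) (Fin 3) ℂ) (c : Fin 3 → Fin 3 → ℂ)
    (E : Fin 3 → Fin 3 → Matrix (Fin 3) (Fin 3) ℂ)
    (hE : ∀ i j, E i j = R i * crossMat (c j - c i) * (R j)ᵀ)
    (F : Matrix (Fin 3 × Fin 3) (Fin 3 × Fin 3) ℂ)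
    (hF : ∀ p q, F p q = if p.1 = q.1 then 0 else E p.1 q.1 p.2 q.2) :
    F = rotBlock R * crossBlock c * (rotBlock R)ᵀ := by
  ext ⟨i, a⟩ ⟨j, b⟩
  have hL : F (i, a) (j, b) = (R i * crossMat (c j - c i) * (R j)ᵀ) a b := by
    rw [hF]
    by_cases h : i = j
    · subst h; simp [crossMat_zero']
    · simp [h, hE]
  rw [hL]
  simp only [mul_apply, transpose_apply, rotBlock, crossBlock, Fintype.sum_prod_type]
  symm
  rw [Finset.sum_eq_single j]
  · refine Finset.sum_congr rfl fun l _ => ?_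
    simp only [if_true]
    congr 1
    rw [Finset.sum_eq_single i]
    · simp
    · intro k _ hk; simp [Ne.symm hk]
    · simp
  · intro k _ hk; simp [Ne.symm hk]
  · simp

lemma cross_tr2 (c : Fin 3 → Fin 3 → ℂ) (u v : Fin 3 → ℂ)
    (hu : c 1 = c 0 + u) (hv : c 2 = c 0 + v) :
    ((crossBlock c) ^ 2).trace = 4 * ((u 0 ^ 2 + u 1 ^ 2 + u 2 ^ 2) + (v 0 ^ 2 + v 1 ^ 2 + v 2 ^ 2)
      + ((v 0 - u 0) ^ 2 + (v 1 - u 1) ^ 2 + (v 2 - u 2) ^ 2)) := by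
  rw [pow_two]
  simp [Matrix.trace, Fin.sum_univ_three, mul_apply, crossBlock, crossMat, Fintype.sum_prod_type,
    hu, hv]
  ring

set_option maxHeartbeats 4000000 in
lemma cross_tr4 (c : Fin 3 → Fin 3 → ℂ) (u v : Fin 3 → ℂ)
    (hu : c 1 = c 0 + u) (hv : c 2 = c 0 + v) :
    ((crossBlock c) ^ 4).trace = ((u 0 ^ 2 + u 1 ^ 2 + u 2 ^ 2) + (v 0 ^ 2 + v 1 ^ 2 + v 2 ^ 2)
      + ((v 0 - u 0) ^ 2 + (v 1 - u 1) ^ 2 + (v 2 - u 2) ^ 2)) ^ 2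
      + 6 * ((u 0 ^ 2 + u 1 ^ 2 + u 2 ^ 2) ^ 2 + (v 0 ^ 2 + v 1 ^ 2 + v 2 ^ 2) ^ 2
      + ((v 0 - u 0) ^ 2 + (v 1 - u 1) ^ 2 + (v 2 - u 2) ^ 2) ^ 2) := by
  have : (crossBlock c) ^ 4 = (crossBlock c * crossBlock c) * (crossBlock c * crossBlock c) := by
    rw [← pow_two, ← pow_two, ← pow_mul]
  rw [this]
  simp [Matrix.trace, Fin.sum_univ_three, mul_apply, crossBlock, crossMat, Fintype.sum_prod_type,
    hu, hv]
  ring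

/-- Martyushev's quartic necessary condition (2.19) for compatible essential matrix
triples, via the 9×9 block matrix of (2.7).
Indices are 0-based: camera `i+1` of the paper is camera `i` here. -/
theorem stmt15 (R : Fin 3 → Matrix (Fin 3) (Fin 3) ℂ) (c : Fin 3 → Fin 3 → ℂ)
    (hR : ∀ i, R i * (R i)ᵀ = 1) (hdR : ∀ i, (R i).det = 1)
    (E : Fin 3 → Fin 3 → Matrix (Fin 3) (Fin 3) ℂ)
    (hE : ∀ i j, E i j = R i * crossMat (c j - c i) * (R j)ᵀ)
    (F : Matrix (Fin 3 × Fin 3) (Fin 3 × Fin 3) ℂ)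
    (hF : ∀ p q, F p q = if p.1 = q.1 then 0 else E p.1 q.1 p.2 q.2) :
    (F ^ 2).trace ^ 2 - 16 * (F ^ 4).trace
      + 24 * (((E 0 1)ᵀ * E 0 1).trace ^ 2 + ((E 0 2)ᵀ * E 0 2).trace ^ 2
        + ((E 1 2)ᵀ * E 1 2).trace ^ 2) = 0 := by
  rw [F_eq R c E hE F hF, conj_trace _ _ (rotBlock_orth R hR), conj_trace _ _ (rotBlock_orth R hR)]
  simp only [hE, trace_E _ _ _ (hR _) (hR _), trace_cross]
  rw [cross_tr2 c (c 1 - c 0) (c 2 - c 0) (by simp) (by simp),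
    cross_tr4 c (c 1 - c 0) (c 2 - c 0) (by simp) (by simp)]
  simp only [Pi.sub_apply]
  ring
end

section
/- Let R_1, R_2, R_3 be complex rotations and c_1, c_2, c_3 ∈ ℂ³, with essential matrices E_ij = R_i * [c_j − c_i]_× * (R_j)ᵀ for i ≠ j (so E_ji = (E_ij)ᵀ). Let F be the 9×9 complex matrix, indexed by (Fin 3) × (Fin 3), whose (i,j) block is E_ij for i ≠ j and whose diagonal blocks are zero. Then the sextic constraint holds: trace(F^2)^3 − 12 * trace(F^2) * trace(F^4) + 32 * trace(F^6) = 0. -/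
open Matrix

lemma aux_poly (a b : Fin 3 → ℂ) (Q : Matrix (Fin 3) (Fin 3) ℂ)
    (hQ : Q = -(crossMat a * crossMat a + crossMat b * crossMat b
      + crossMat (a + b) * crossMat (a + b))) :
    Q.trace ^ 3 - 6 * Q.trace * (Q * Q).trace + 8 * (Q * Q * Q).trace = 0 := by
  have h : ∀ i j, Q i j = !![2*(a 1^2+a 2^2+b 1^2+b 2^2+a 1*b 1+a 2*b 2),
      -(2*a 0*a 1+2*b 0*b 1+a 0*b 1+a 1*b 0), -(2*a 0*a 2+2*b 0*b 2+a 0*b 2+a 2*b 0);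
      -(2*a 0*a 1+2*b 0*b 1+a 0*b 1+a 1*b 0), 2*(a 0^2+a 2^2+b 0^2+b 2^2+a 0*b 0+a 2*b 2),
      -(2*a 1*a 2+2*b 1*b 2+a 1*b 2+a 2*b 1);
      -(2*a 0*a 2+2*b 0*b 2+a 0*b 2+a 2*b 0), -(2*a 1*a 2+2*b 1*b 2+a 1*b 2+a 2*b 1),
      2*(a 0^2+a 1^2+b 0^2+b 1^2+a 0*b 0+a 1*b 1)] i j := by
    intro i j
    rw [hQ]
    fin_cases i <;> fin_cases j <;>
      simp [crossMat, Matrix.mul_apply, Fin.sum_univ_three] <;> ring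
  simp only [Matrix.trace, Matrix.diag, Matrix.mul_apply, Fin.sum_univ_three, h]
  simp
  ring

lemma aux_tr (S T Q : Matrix (Fin 3) (Fin 3) ℂ) (hQ : Q = S * S - 3 • T)
    (N : Matrix (Fin 3 ⊕ Fin 3) (Fin 3 ⊕ Fin 3) ℂ)
    (hN : N = fromBlocks S T (-(3 • (1 : Matrix (Fin 3) (Fin 3) ℂ))) (-S)) :
    (N ^ 2).trace = 2 * Q.trace ∧ (N ^ 4).trace = 2 * (Q * Q).trace ∧
      (N ^ 6).trace = 2 * (Q * Q * Q).trace := by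
  have h2 : N ^ 2 = fromBlocks Q (S * T - T * S) 0 Q := by
    rw [pow_two, hN, fromBlocks_multiply, hQ]
    congr 1
    all_goals noncomm_ring
  have h4 : N ^ 4 = N ^ 2 * N ^ 2 := by rw [← pow_add]
  have h6 : N ^ 6 = N ^ 2 * N ^ 2 * N ^ 2 := by rw [← pow_add, ← pow_add]
  have htr : ∀ A B D G : Matrix (Fin 3) (Fin 3) ℂ,
      (fromBlocks A B D G).trace = A.trace + G.trace := by
    intro A B D G
    simp only [Matrix.trace, Fintype.sum_sum_type]
    rfl
  rw [h6, h4, h2]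
  simp [fromBlocks_multiply, two_mul, htr]

lemma aux_cyc {m n : Type*} [Fintype m] [Fintype n] [DecidableEq m] [DecidableEq n]
    (X : Matrix m n ℂ) (Y : Matrix n m ℂ) (k : ℕ) :
    ((X * Y) ^ (k + 1)).trace = ((Y * X) ^ (k + 1)).trace := by
  have h : ∀ k : ℕ, (X * Y) ^ (k + 1) = X * ((Y * X) ^ k * Y) := by
    intro k
    induction k with
    | zero => simp
    | succ k ih => rw [pow_succ, ih, pow_succ]; simp only [Matrix.mul_assoc]
  rw [h, Matrix.trace_mul_comm, Matrix.mul_assoc, pow_succ]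

lemma crossMat_sub (a b : Fin 3 → ℂ) : crossMat (a - b) = crossMat a - crossMat b := by
  ext i j
  fin_cases i <;> fin_cases j <;> simp [crossMat] <;> ring

/-- Martyushev's sextic (2.20) for compatible essential matrix triples, via the
9×9 block matrix of (2.7). Indices are 0-based: camera `i+1` of the paper is
camera `i` here. -/
theorem stmt16 (R : Fin 3 → Matrix (Fin 3) (Fin 3) ℂ) (c : Fin 3 → Fin 3 → ℂ)
    (hR : ∀ i, R i * (R i)ᵀ = 1) (hdR : ∀ i, (R i).det = 1)
    (E : Fin 3 → Fin 3 → Matrix (Fin 3) (Fin 3) ℂ)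
    (hE : ∀ i j, E i j = R i * crossMat (c j - c i) * (R j)ᵀ)
    (F : Matrix (Fin 3 × Fin 3) (Fin 3 × Fin 3) ℂ)
    (hF : ∀ p q, F p q = if p.1 = q.1 then 0 else E p.1 q.1 p.2 q.2) :
    (F ^ 2).trace ^ 3 - 12 * (F ^ 2).trace * (F ^ 4).trace
      + 32 * (F ^ 6).trace = 0 := by
  have hR' : ∀ i, (R i)ᵀ * R i = 1 := fun i => mul_eq_one_comm.mp (hR i)
  let C : Fin 3 → Matrix (Fin 3) (Fin 3) ℂ := fun i => crossMat (c i)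
  let X : Matrix (Fin 3 × Fin 3) (Fin 3 ⊕ Fin 3) ℂ :=
    fun p => Sum.elim (fun k => R p.1 p.2 k) (fun k => (R p.1 * C p.1) p.2 k)
  let Y : Matrix (Fin 3 ⊕ Fin 3) (Fin 3 × Fin 3) ℂ :=
    fun s q => Sum.elim (fun k => (C q.1 * (R q.1)ᵀ) k q.2) (fun k => -(R q.1)ᵀ k q.2) s
  have hFXY : F = X * Y := by
    ext p q
    have h1 : (X * Y) p q = E p.1 q.1 p.2 q.2 := by
      have : E p.1 q.1 = R p.1 * (C q.1 * (R q.1)ᵀ) + (R p.1 * C p.1) * (-(R q.1)ᵀ) := by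
        rw [hE, crossMat_sub]
        simp only [C]
        noncomm_ring
      rw [this, Matrix.add_apply, Matrix.mul_apply, Matrix.mul_apply, Matrix.mul_apply,
        Fintype.sum_sum_type]
      rfl
    rw [h1, hF]
    split_ifs with h
    · rw [h, hE, sub_self]
      have : crossMat 0 = 0 := by
        ext i j
        fin_cases i <;> fin_cases j <;> simp [crossMat]
      simp [this]
    · rfl
  let S := C 0 + C 1 + C 2
  let T := C 0 * C 0 + C 1 * C 1 + C 2 * C 2
  have key : ∀ (A B : Fin 3 → Matrix (Fin 3) (Fin 3) ℂ) (i j : Fin 3),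
      ∑ q : Fin 3 × Fin 3, A q.1 i q.2 * B q.1 q.2 j
        = (A 0 * B 0 + A 1 * B 1 + A 2 * B 2) i j := by
    intro A B i j
    rw [Fintype.sum_prod_type, Fin.sum_univ_three]
    simp only [Matrix.add_apply, Matrix.mul_apply]
  have e1 : ∀ i, C i * (R i)ᵀ * R i = C i := fun i => by
    rw [Matrix.mul_assoc, hR', Matrix.mul_one]
  have e2 : ∀ i, (R i)ᵀ * (R i * C i) = C i := fun i => by
    rw [← Matrix.mul_assoc, hR', Matrix.one_mul]
  have e3 : ∀ i, C i * (R i)ᵀ * (R i * C i) = C i * C i := fun i => by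
    rw [Matrix.mul_assoc, e2]
  have hN : Y * X = fromBlocks S T (-(3 • (1 : Matrix (Fin 3) (Fin 3) ℂ))) (-S) := by
    ext s t
    rcases s with i | i <;> rcases t with j | j
    · refine (key (fun q => C q * (R q)ᵀ) R i j).trans ?_
      simp only [e1]; rfl
    · refine (key (fun q => C q * (R q)ᵀ) (fun q => R q * C q) i j).trans ?_
      simp only [e3]; rfl
    · refine (key (fun q => -(R q)ᵀ) R i j).trans ?_
      simp only [Matrix.neg_mul, hR', fromBlocks_apply₂₁]
      refine congrFun (congrFun (?_ : _ = (_ : Matrix (Fin 3) (Fin 3) ℂ)) i) j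
      abel
    · refine (key (fun q => -(R q)ᵀ) (fun q => R q * C q) i j).trans ?_
      simp only [Matrix.neg_mul, e2, fromBlocks_apply₂₂, S]
      refine congrFun (congrFun (?_ : _ = (_ : Matrix (Fin 3) (Fin 3) ℂ)) i) j
      abel
  obtain ⟨t2, t4, t6⟩ := aux_tr S T _ rfl _ hN
  have hp := aux_poly (c 1 - c 0) (c 2 - c 1) (S * S - 3 • T) (by
    rw [sub_add_sub_comm, add_comm (c 1), add_sub_add_right_eq_sub]
    simp only [crossMat_sub, S, T, C]
    noncomm_ring)
  rw [hFXY, aux_cyc X Y 1, aux_cyc X Y 3, aux_cyc X Y 5, t2, t4, t6]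
  linear_combination 8 * hp
end

section
/- Let c ∈ ℂ³ with c ⬝ᵥ c ≠ 0 and let R be a complex rotation. Define the twisted-pair rotation R' = R * ((2 / (c ⬝ᵥ c)) • vecMulVec c c − 1), where vecMulVec c c is the outer product c * cᵀ. Then: (1) R' is a complex rotation, i.e., R' * (R')ᵀ = 1 and det R' = 1; and (2) the twisted pair yields the same essential matrix: [−c]_× * (R')ᵀ = [c]_× * Rᵀ. -/
open Matrix

theorem twist_aux (c : Fin 3 → ℂ) (t : ℂ) (ht : t * (c ⬝ᵥ c) = 2) :
    (t • vecMulVec c c - 1)ᵀ = t • vecMulVec c c - 1 ∧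
    (t • vecMulVec c c - 1) * (t • vecMulVec c c - 1) = 1 ∧
    (t • vecMulVec c c - 1).det = 1 ∧
    crossMat (-c) * (t • vecMulVec c c - 1) = crossMat c := by
  refine ⟨?_, ?_, ?_, ?_⟩
  · simp [transpose_vecMulVec]
  · have h : vecMulVec c c * vecMulVec c c = (c ⬝ᵥ c) • vecMulVec c c := by
      rw [vecMulVec_mul_vecMulVec]
      ext i j
      simp [vecMulVec_apply]
      ring
    rw [sub_mul, mul_sub, smul_mul_smul_comm, h, smul_smul,
      show t * t * (c ⬝ᵥ c) = t + t by linear_combination t * ht, add_smul]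
    simp
  · simp only [dotProduct, Fin.sum_univ_three] at ht
    rw [det_fin_three]
    simp [vecMulVec_apply]
    linear_combination ht
  · ext i j
    fin_cases i <;> fin_cases j <;>
      simp [crossMat, mul_apply, Fin.sum_univ_three, vecMulVec_apply] <;> ring

/-- The twisted pair: `R' = R((2/(cᵀc)) c cᵀ − I)` is again a complex rotation, and
the twisted pair `(R', −c)` yields the same essential matrix as `(R, c)`. -/
theorem stmt17 (c : Fin 3 → ℂ) (hc : c ⬝ᵥ c ≠ 0)
    (R : Matrix (Fin 3) (Fin 3) ℂ) (hR : R * Rᵀ = 1) (hdR : R.det = 1)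
    (R' : Matrix (Fin 3) (Fin 3) ℂ)
    (hR' : R' = R * ((2 / (c ⬝ᵥ c)) • vecMulVec c c - 1)) :
    (R' * R'ᵀ = 1 ∧ R'.det = 1) ∧ crossMat (-c) * R'ᵀ = crossMat c * Rᵀ := by
  have ht : 2 / (c ⬝ᵥ c) * (c ⬝ᵥ c) = 2 := div_mul_cancel₀ _ hc
  obtain ⟨h1, h2, h3, h4⟩ := twist_aux c _ ht
  subst hR'
  refine ⟨⟨?_, ?_⟩, ?_⟩
  · rw [transpose_mul, h1, Matrix.mul_assoc, ← Matrix.mul_assoc _ _ Rᵀ, h2, Matrix.one_mul, hR]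
  · rw [det_mul, hdR, h3, one_mul]
  · rw [transpose_mul, h1, ← Matrix.mul_assoc, h4]
end

section
/- Let A, B, C be 3×3 complex matrices satisfying Aᵀ * A * B − (1/2 : ℂ) * trace(Aᵀ * A) • B + adj(A) * Cᵀ = 0. Then the matrix C * adj(A)ᵀ * B is symmetric: (C * adj(A)ᵀ * B)ᵀ = C * adj(A)ᵀ * B. -/
open Matrix

/-- Remark 3.6: if `Aᵀ A B − (1/2) tr(Aᵀ A) B + adj(A) Cᵀ = 0`, then
`C adj(A)ᵀ B` is symmetric. -/
theorem stmt18 (A B C : Matrix (Fin 3) (Fin 3) ℂ)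
    (h : Aᵀ * A * B - ((1 / 2 : ℂ) * (Aᵀ * A).trace) • B + A.adjugate * Cᵀ = 0) :
    (C * A.adjugateᵀ * B)ᵀ = C * A.adjugateᵀ * B := by
  have h1 : A.adjugate * Cᵀ = ((1 / 2 : ℂ) * (Aᵀ * A).trace) • B - Aᵀ * A * B := by
    rw [← sub_eq_zero, ← h]; abel
  have h2 : C * A.adjugateᵀ = ((1 / 2 : ℂ) * (Aᵀ * A).trace) • Bᵀ - Bᵀ * (Aᵀ * A) := by
    have := congrArg Matrix.transpose h1
    simpa only [transpose_mul, transpose_sub, transpose_smul, transpose_transpose] using this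
  rw [h2]
  simp only [transpose_mul, transpose_sub, transpose_smul, transpose_transpose, sub_mul, mul_sub,
    smul_mul, mul_smul, Matrix.mul_assoc]
end

section
/- Let F_12, F_13, F_23 be 3×3 complex matrices, each of rank 2. Let e_21, e_12, e_31, e_13, e_32, e_23 ∈ ℂ³ be nonzero vectors with F_12.mulVec e_21 = 0, (F_12)ᵀ.mulVec e_12 = 0, F_13.mulVec e_31 = 0, (F_13)ᵀ.mulVec e_13 = 0, F_23.mulVec e_32 = 0, (F_23)ᵀ.mulVec e_23 = 0. Assume the noncollinearity conditions: e_12 and e_13 are linearly independent, e_21 and e_23 are linearly independent, and e_31 and e_32 are linearly independent. Then the following are equivalent: (a) e_13 ⬝ᵥ (F_12.mulVec e_23) = 0 and e_12 ⬝ᵥ (F_13.mulVec e_32) = 0 and e_21 ⬝ᵥ (F_23.mulVec e_31) = 0; (b) there exist invertible upper-triangular matrices K_1, K_2, K_3 ∈ Matrix (Fin 3) (Fin 3) ℂ, complex rotations R_1, R_2, R_3, vectors c_1, c_2, c_3 ∈ ℂ³, and nonzero scalars λ_12, λ_13, λ_23 ∈ ℂ such that F_ij = λ_ij • ((K_i)⁻ᵀ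 * R_i * [c_j − c_i]_× * (R_j)ᵀ * (K_j)⁻¹) for each pair (i,j) ∈ {(1,2),(1,3),(2,3)}. -/
open Matrix

theorem aux_ker (F : Matrix (Fin 3) (Fin 3) ℂ) (h : F.rank = 2) (e g : Fin 3 → ℂ)
    (he : F *ᵥ e = 0) (hli : LinearIndependent ℂ ![e, g]) : F *ᵥ g ≠ 0 := by
  intro hg
  have h1 := LinearMap.finrank_range_add_finrank_ker F.mulVecLin
  have h2 : Module.finrank ℂ (LinearMap.range F.mulVecLin) = 2 := h
  have h3 : Module.finrank ℂ (Fin 3 → ℂ) = 3 := by simp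
  have h4 : Submodule.span ℂ (Set.range ![e, g]) ≤ LinearMap.ker F.mulVecLin := by
    rw [Submodule.span_le]
    rintro _ ⟨i, rfl⟩
    fin_cases i
    · simpa using he
    · simpa using hg
  have h5 := Submodule.finrank_mono h4
  rw [finrank_span_eq_card hli] at h5
  simp at h5
  omega

theorem aux_compl (e f : Fin 3 → ℂ) (hli : LinearIndependent ℂ ![e, f]) :
    ∃ u : Fin 3 → ℂ, (Matrix.of ![e, f, u]).det ≠ 0 := by
  by_contra hcon
  push Not at hcon
  have h0 := hcon ![1,0,0]
  have h1 := hcon ![0,1,0]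
  have h2 := hcon ![0,0,1]
  simp [Matrix.det_fin_three] at h0 h1 h2
  have hne := hli.ne_zero 0
  rw [LinearIndependent.pair_iff] at hli
  apply hne
  simp only [Matrix.cons_val_zero]
  ext i
  have := (hli (f i) (-e i) (by
    ext j
    fin_cases i <;> fin_cases j <;> simp <;> grind)).2
  simpa using this

theorem aux_nz (e f u w : Fin 3 → ℂ) (hd : (Matrix.of ![e, f, u]).det ≠ 0) (hw : w ≠ 0)
    (h1 : e ⬝ᵥ w = 0) (h2 : f ⬝ᵥ w = 0) : u ⬝ᵥ w ≠ 0 := by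
  intro h3
  apply hw
  apply Matrix.eq_zero_of_mulVec_eq_zero hd
  ext i
  fin_cases i
  · simpa using h1
  · simpa using h2
  · simpa using h3

theorem aux_left (F : Matrix (Fin 3) (Fin 3) ℂ) (e v : Fin 3 → ℂ) : e ⬝ᵥ (F *ᵥ v) = v ⬝ᵥ (Fᵀ *ᵥ e) := by
  rw [Matrix.mulVec_transpose, Matrix.dotProduct_mulVec, dotProduct_comm]

theorem aux_left0 (F : Matrix (Fin 3) (Fin 3) ℂ) (e : Fin 3 → ℂ) (h : Fᵀ *ᵥ e = 0) (v : Fin 3 → ℂ) :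
    e ⬝ᵥ (F *ᵥ v) = 0 := by
  rw [aux_left, h]; simp

theorem aux_cross (M : Matrix (Fin 3) (Fin 3) ℂ) (v : Fin 3 → ℂ) :
    Mᵀ * crossMat (M *ᵥ v) * M = M.det • crossMat v := by
  ext i j
  fin_cases i <;> fin_cases j <;>
    simp [crossMat, Matrix.mul_apply, Fin.sum_univ_three, Matrix.mulVec, dotProduct, Matrix.det_fin_three] <;> ring

theorem aux_chol (A : Matrix (Fin 3) (Fin 3) ℂ)
    (h1 : (A * Aᵀ) 2 2 ≠ 0)
    (h2 : (A * Aᵀ) 1 1 * (A * Aᵀ) 2 2 - (A * Aᵀ) 1 2 * (A * Aᵀ) 2 1 ≠ 0)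
    (h3 : (A * Aᵀ).det ≠ 0) :
    ∃ K R : Matrix (Fin 3) (Fin 3) ℂ, K.BlockTriangular id ∧ IsUnit K.det ∧ R * Rᵀ = 1 ∧ R.det = 1 ∧
      A = K * R := by
  have hs : (A * Aᵀ)ᵀ = A * Aᵀ := by simp
  have key : ∃ K : Matrix (Fin 3) (Fin 3) ℂ, K.BlockTriangular id ∧ K * Kᵀ = A * Aᵀ := by
    generalize A * Aᵀ = S at *
    have s10 : S 1 0 = S 0 1 := congrFun (congrFun hs 0) 1
    have s20 : S 2 0 = S 0 2 := congrFun (congrFun hs 0) 2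
    have s21 : S 2 1 = S 1 2 := congrFun (congrFun hs 1) 2
    obtain ⟨f, hf⟩ := IsAlgClosed.exists_pow_nat_eq (S 2 2) (n := 2) (by norm_num)
    have hf0 : f ≠ 0 := by rintro rfl; apply h1; rw [← hf]; norm_num
    obtain ⟨d, hd⟩ := IsAlgClosed.exists_pow_nat_eq (S 1 1 - (S 1 2 / f)^2) (n := 2) (by norm_num)
    have hd0 : d ≠ 0 := by
      rintro rfl
      apply h2
      rw [s21, ← hf]
      field_simp at hd
      linear_combination -hd
    obtain ⟨a, ha⟩ := IsAlgClosed.exists_pow_nat_eq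
      (S 0 0 - ((S 0 1 - S 0 2 / f * (S 1 2 / f)) / d)^2 - (S 0 2 / f)^2) (n := 2) (by norm_num)
    refine ⟨!![a, (S 0 1 - S 0 2 / f * (S 1 2 / f)) / d, S 0 2 / f; 0, d, S 1 2 / f; 0, 0, f], ?_, ?_⟩
    · intro i j hij
      fin_cases i <;> fin_cases j <;> simp at hij ⊢
    · ext i j
      fin_cases i <;> fin_cases j <;>
        simp [Matrix.mul_apply, Fin.sum_univ_three, s10, s20, s21]
      · linear_combination ha
      · field_simp; ring
      · field_simp
      · field_simp; ring
      · linear_combination hd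
      · field_simp
      · field_simp
      · field_simp
      · linear_combination hf
  obtain ⟨K, hK, hKK⟩ := key
  have hKd : K.det ≠ 0 := by
    intro h; apply h3; rw [← hKK]; simp [h]
  have hKu : IsUnit K.det := isUnit_iff_ne_zero.2 hKd
  have hA : A = K * (K⁻¹ * A) := by rw [Matrix.mul_nonsing_inv_cancel_left _ _ hKu]
  have hR : (K⁻¹ * A) * (K⁻¹ * A)ᵀ = 1 := by
    rw [Matrix.transpose_mul, Matrix.mul_assoc, ← Matrix.mul_assoc A, ← hKK, Matrix.transpose_nonsing_inv,
      Matrix.mul_assoc K, Matrix.mul_nonsing_inv _ (by simpa using hKu), Matrix.mul_one,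
      Matrix.nonsing_inv_mul _ hKu]
  have hdet : (K⁻¹ * A).det = 1 ∨ (K⁻¹ * A).det = -1 := by
    have := congrArg Matrix.det hR
    rw [Matrix.det_mul, Matrix.det_transpose, Matrix.det_one] at this
    exact mul_self_eq_one_iff.1 this
  rcases hdet with h | h
  · exact ⟨K, K⁻¹ * A, hK, hKu, hR, h, hA⟩
  · refine ⟨-K, -(K⁻¹ * A), hK.neg, ?_, ?_, ?_, ?_⟩
    · rw [Matrix.det_neg]; simpa using hKd
    · rw [Matrix.transpose_neg, neg_mul_neg, hR]
    · rw [Matrix.det_neg, h]; norm_num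
    · rw [neg_mul_neg, ← hA]

noncomputable def auxP {R : Type*} [CommRing R] (S : Matrix (Fin 3) (Fin 3) R) : R :=
  S 2 2 * (S 1 1 * S 2 2 - S 1 2 * S 2 1) * S.det

theorem auxP_map {R T : Type*} [CommRing R] [CommRing T] (f : R →+* T) (S : Matrix (Fin 3) (Fin 3) R) :
    f (auxP S) = auxP (S.map f) := by
  simp [auxP, Matrix.det_fin_three]

theorem aux_gen (A : Fin 3 → Matrix (Fin 3) (Fin 3) ℂ) (hA : ∀ i, IsUnit (A i).det) :
    ∃ G : Matrix (Fin 3) (Fin 3) ℂ, ∀ i, auxP ((A i * G) * (A i * G)ᵀ) ≠ 0 := by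
  let X : Matrix (Fin 3) (Fin 3) (MvPolynomial (Fin 3 × Fin 3) ℂ) := Matrix.mvPolynomialX _ _ _
  let Y : Fin 3 → Matrix (Fin 3) (Fin 3) (MvPolynomial (Fin 3 × Fin 3) ℂ) := fun i => (A i).map MvPolynomial.C * X
  let P : Fin 3 → MvPolynomial (Fin 3 × Fin 3) ℂ := fun i => auxP (Y i * (Y i)ᵀ)
  have hev : ∀ (G : Matrix (Fin 3) (Fin 3) ℂ) i,
      MvPolynomial.eval (fun p : Fin 3 × Fin 3 => G p.1 p.2) (P i) = auxP ((A i * G) * (A i * G)ᵀ) := by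
    intro G i
    simp only [P]
    rw [auxP_map]
    congr 1
    have hY : (Y i).map (MvPolynomial.eval (fun p : Fin 3 × Fin 3 => G p.1 p.2)) = A i * G := by
      ext a b
      simp [Y, X, Matrix.mul_apply, Matrix.mvPolynomialX]
    rw [Matrix.map_mul, Matrix.transpose_map, hY]
  have hP : ∀ i, P i ≠ 0 := by
    intro i h
    have := hev (A i)⁻¹ i
    rw [h, Matrix.mul_nonsing_inv _ (hA i)] at this
    simp [auxP] at this
  have hprod : (∏ i, P i) ≠ 0 := Finset.prod_ne_zero_iff.2 fun i _ => hP i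
  have : ∃ x, MvPolynomial.eval x (∏ i, P i) ≠ 0 := by
    by_contra hcon
    push Not at hcon
    exact hprod (MvPolynomial.funext fun x => by simpa using hcon x)
  obtain ⟨x, hx⟩ := this
  refine ⟨Matrix.of fun a b => x (a, b), fun i => ?_⟩
  rw [← hev]
  rw [map_prod] at hx
  exact Finset.prod_ne_zero_iff.1 hx i (Finset.mem_univ i)

/-- Affine form implies the calibrated form. -/
theorem aux_calib (A : Fin 3 → Matrix (Fin 3) (Fin 3) ℂ) (hA : ∀ i, IsUnit (A i).det) :
    ∃ (K R : Fin 3 → Matrix (Fin 3) (Fin 3) ℂ) (G : Matrix (Fin 3) (Fin 3) ℂ),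
      (∀ i, (K i).BlockTriangular id) ∧ (∀ i, IsUnit (K i).det) ∧
      (∀ i, R i * (R i)ᵀ = 1) ∧ (∀ i, (R i).det = 1) ∧ IsUnit G.det ∧ ∀ i, A i * G = K i * R i := by
  obtain ⟨G, hG⟩ := aux_gen A hA
  have hch := fun i => aux_chol (A i * G) (fun h => hG i (by simp only [auxP, h]; simp))
    (fun h => hG i (by simp only [auxP, h]; simp)) (fun h => hG i (by simp only [auxP, h]; simp))
  choose K R h1 h2 h3 h4 h5 using hch
  refine ⟨K, R, G, h1, h2, h3, h4, ?_, h5⟩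
  rw [isUnit_iff_ne_zero]
  intro h
  apply hG 0
  simp [auxP, h]

theorem aux_form (F Ai Aj Ki Kj Ri Rj G : Matrix (Fin 3) (Fin 3) ℂ) (l : ℂ) (ci cj : Fin 3 → ℂ)
    (hAi : IsUnit Ai.det) (hAj : IsUnit Aj.det) (hG : IsUnit G.det)
    (hKi : IsUnit Ki.det) (hKj : IsUnit Kj.det) (hRi : Ri * Riᵀ = 1) (hRj : Rj * Rjᵀ = 1)
    (hi : Ai * G = Ki * Ri) (hj : Aj * G = Kj * Rj)
    (hF : Aiᵀ * F * Aj = l • crossMat (cj - ci)) :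
    F = (l * G.det) • ((Ki⁻¹)ᵀ * Ri * crossMat (G⁻¹ *ᵥ cj - G⁻¹ *ᵥ ci) * Rjᵀ * Kj⁻¹) := by
  have hc : cj - ci = G *ᵥ (G⁻¹ *ᵥ cj - G⁻¹ *ᵥ ci) := by
    rw [← Matrix.mulVec_sub, Matrix.mulVec_mulVec, Matrix.mul_nonsing_inv _ hG, Matrix.one_mulVec]
  have h1 : (Ki * Ri)ᵀ * F * (Kj * Rj) = (l * G.det) • crossMat (G⁻¹ *ᵥ cj - G⁻¹ *ᵥ ci) := by
    rw [← hi, ← hj, mul_smul, ← aux_cross, ← hc]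
    calc _ = Gᵀ * (Aiᵀ * F * Aj) * G := by simp only [Matrix.transpose_mul, Matrix.mul_assoc]
      _ = _ := by rw [hF]; simp
  have hi' : (Ki⁻¹)ᵀ * Ri * (Ki * Ri)ᵀ = 1 := by
    rw [Matrix.transpose_mul, Matrix.mul_assoc, ← Matrix.mul_assoc Ri, hRi, Matrix.one_mul,
      ← Matrix.transpose_mul, Matrix.mul_nonsing_inv _ hKi, Matrix.transpose_one]
  have hj' : (Kj * Rj) * (Rjᵀ * Kj⁻¹) = 1 := by
    rw [Matrix.mul_assoc, ← Matrix.mul_assoc Rj, hRj, Matrix.one_mul, Matrix.mul_nonsing_inv _ hKj]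
  calc F = ((Ki⁻¹)ᵀ * Ri * (Ki * Ri)ᵀ) * F * ((Kj * Rj) * (Rjᵀ * Kj⁻¹)) := by rw [hi', hj']; simp
    _ = (Ki⁻¹)ᵀ * Ri * ((Ki * Ri)ᵀ * F * (Kj * Rj)) * (Rjᵀ * Kj⁻¹) := by simp only [Matrix.mul_assoc]
    _ = _ := by rw [h1]; simp only [Matrix.mul_smul, Matrix.smul_mul, Matrix.mul_assoc]

theorem aux_par (c v : Fin 3 → ℂ) (hc : c ≠ 0) (h : crossMat c *ᵥ v = 0) : ∃ s : ℂ, v = s • c := by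
  have h0 := congrFun h 0
  have h1 := congrFun h 1
  have h2 := congrFun h 2
  simp [crossMat, Matrix.mulVec, dotProduct, Fin.sum_univ_three] at h0 h1 h2
  obtain ⟨i, hi⟩ := Function.ne_iff.1 hc
  refine ⟨v i / c i, ?_⟩
  ext j
  fin_cases i <;> fin_cases j <;> simp at hi ⊢ <;> field_simp <;> grind

theorem crossMat_transpose (c : Fin 3 → ℂ) : (crossMat c)ᵀ = - crossMat c := by
  ext i j
  fin_cases i <;> fin_cases j <;> simp [crossMat]

/-- kernel facts from the affine form -/
theorem aux_epi (F B B' : Matrix (Fin 3) (Fin 3) ℂ) (l : ℂ) (c : Fin 3 → ℂ) (hF0 : F.rank = 2)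
    (hB : IsUnit B.det) (hB' : IsUnit B'.det) (hl : l ≠ 0)
    (hF : F = l • (Bᵀ * crossMat c * B')) :
    (∀ e, F *ᵥ e = 0 → ∃ s : ℂ, B' *ᵥ e = s • c) ∧ (∀ e, Fᵀ *ᵥ e = 0 → ∃ s : ℂ, B *ᵥ e = s • c) := by
  have hc : c ≠ 0 := by
    rintro rfl
    have : crossMat 0 = 0 := by ext i j; fin_cases i <;> fin_cases j <;> simp [crossMat]
    rw [hF, this] at hF0
    simp at hF0
  constructor
  · intro e he
    apply aux_par _ _ hc
    rw [hF, Matrix.smul_mulVec, smul_eq_zero_iff_right hl, Matrix.mul_assoc, ← Matrix.mulVec_mulVec,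
      ← Matrix.mulVec_mulVec] at he
    exact Matrix.eq_zero_of_mulVec_eq_zero (by simpa using hB) he
  · intro e he
    apply aux_par _ _ hc
    rw [hF, Matrix.transpose_smul, Matrix.smul_mulVec, smul_eq_zero_iff_right hl, Matrix.transpose_mul,
      Matrix.transpose_mul, Matrix.transpose_transpose, crossMat_transpose, ← Matrix.mulVec_mulVec,
      ← Matrix.mulVec_mulVec] at he
    have := Matrix.eq_zero_of_mulVec_eq_zero (by simpa using hB') he
    rwa [Matrix.neg_mulVec, neg_eq_zero] at this

theorem aux_trip (F B B' : Matrix (Fin 3) (Fin 3) ℂ) (l : ℂ) (c e e' : Fin 3 → ℂ)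
    (hF : F = l • (Bᵀ * crossMat c * B')) :
    e ⬝ᵥ (F *ᵥ e') = l * ((B *ᵥ e) ⬝ᵥ (crossMat c *ᵥ (B' *ᵥ e'))) := by
  rw [hF, Matrix.smul_mulVec, dotProduct_smul, smul_eq_mul, ← Matrix.mulVec_mulVec,
    ← Matrix.mulVec_mulVec, Matrix.dotProduct_mulVec e, Matrix.vecMul_transpose]

theorem aux_entry (F : Matrix (Fin 3) (Fin 3) ℂ) (U V : Fin 3 → Fin 3 → ℂ) (i j : Fin 3) :
    (Matrix.of U * F * (Matrix.of V)ᵀ) i j = U i ⬝ᵥ (F *ᵥ V j) := by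
  rw [Matrix.mul_assoc, Matrix.mul_apply']
  congr 1

theorem aux_core (F12 F13 F23 : Matrix (Fin 3) (Fin 3) ℂ)
    (h12 : F12.rank = 2) (h13 : F13.rank = 2) (h23 : F23.rank = 2)
    (e21 e12 e31 e13 e32 e23 : Fin 3 → ℂ)
    (hk21 : F12 *ᵥ e21 = 0) (hk12 : F12ᵀ *ᵥ e12 = 0)
    (hk31 : F13 *ᵥ e31 = 0) (hk13 : F13ᵀ *ᵥ e13 = 0)
    (hk32 : F23 *ᵥ e32 = 0) (hk23 : F23ᵀ *ᵥ e23 = 0)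
    (hli1 : LinearIndependent ℂ ![e12, e13])
    (hli2 : LinearIndependent ℂ ![e21, e23])
    (hli3 : LinearIndependent ℂ ![e31, e32])
    (t1 : e13 ⬝ᵥ (F12 *ᵥ e23) = 0) (t2 : e12 ⬝ᵥ (F13 *ᵥ e32) = 0)
    (t3 : e21 ⬝ᵥ (F23 *ᵥ e31) = 0) :
    ∃ (A : Fin 3 → Matrix (Fin 3) (Fin 3) ℂ) (c : Fin 3 → Fin 3 → ℂ) (l12 l13 l23 : ℂ),
      (∀ i, IsUnit (A i).det) ∧ l12 ≠ 0 ∧ l13 ≠ 0 ∧ l23 ≠ 0 ∧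
      (A 0)ᵀ * F12 * A 1 = l12 • crossMat (c 1 - c 0) ∧
      (A 0)ᵀ * F13 * A 2 = l13 • crossMat (c 2 - c 0) ∧
      (A 1)ᵀ * F23 * A 2 = l23 • crossMat (c 2 - c 1) := by
  have hli1' := LinearIndependent.pair_symm_iff.1 hli1
  have hli2' := LinearIndependent.pair_symm_iff.1 hli2
  have hli3' := LinearIndependent.pair_symm_iff.1 hli3
  have L12 := aux_left0 _ _ hk12
  have L13 := aux_left0 _ _ hk13
  have L23 := aux_left0 _ _ hk23
  have r12 : F12ᵀ.rank = 2 := by rw [Matrix.rank_transpose, h12]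
  have r13 : F13ᵀ.rank = 2 := by rw [Matrix.rank_transpose, h13]
  have r23 : F23ᵀ.rank = 2 := by rw [Matrix.rank_transpose, h23]
  obtain ⟨u1, hu1⟩ := aux_compl _ _ hli1
  obtain ⟨v2, hv2⟩ := aux_compl _ _ hli2
  obtain ⟨v3, hv3⟩ := aux_compl _ _ hli3
  -- nonvanishing for arbitrary complements
  have nβ : u1 ⬝ᵥ (F12 *ᵥ e23) ≠ 0 := aux_nz _ _ _ _ hu1 (aux_ker _ h12 _ _ hk21 hli2) (L12 _) t1
  have nδ : u1 ⬝ᵥ (F13 *ᵥ e32) ≠ 0 := aux_nz _ _ _ _ hu1 (aux_ker _ h13 _ _ hk31 hli3) t2 (L13 _)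
  have nα : ∀ u, (Matrix.of ![e21, e23, u]).det ≠ 0 → e13 ⬝ᵥ (F12 *ᵥ u) ≠ 0 := by
    intro u hu
    rw [aux_left]
    refine aux_nz _ _ _ _ hu (aux_ker _ r12 _ _ hk12 hli1) ?_ ?_
    · rw [← aux_left, hk21]; simp
    · rw [← aux_left, t1]
  have nζ : ∀ u, (Matrix.of ![e21, e23, u]).det ≠ 0 → u ⬝ᵥ (F23 *ᵥ e31) ≠ 0 := fun u hu =>
    aux_nz _ _ _ _ hu (aux_ker _ h23 _ _ hk32 hli3') t3 (L23 _)
  have nγ : ∀ u, (Matrix.of ![e31, e32, u]).det ≠ 0 → e12 ⬝ᵥ (F13 *ᵥ u) ≠ 0 := by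
    intro u hu
    rw [aux_left]
    refine aux_nz _ _ _ _ hu (aux_ker _ r13 _ _ hk13 hli1') ?_ ?_
    · rw [← aux_left, hk31]; simp
    · rw [← aux_left, t2]
  have nε : ∀ u, (Matrix.of ![e31, e32, u]).det ≠ 0 → e21 ⬝ᵥ (F23 *ᵥ u) ≠ 0 := by
    intro u hu
    rw [aux_left]
    refine aux_nz _ _ _ _ hu (aux_ker _ r23 _ _ hk23 hli2') ?_ ?_
    · rw [← aux_left, t3]
    · rw [← aux_left, hk32]; simp
  have hdet : ∀ (e f u : Fin 3 → ℂ) (s t : ℂ),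
      (Matrix.of ![e, f, u + s • e + t • f]).det = (Matrix.of ![e, f, u]).det := by
    intro e f u s t
    simp [Matrix.det_fin_three]; ring
  obtain ⟨u2, hu2, z12⟩ : ∃ u2, (Matrix.of ![e21, e23, u2]).det ≠ 0 ∧ u1 ⬝ᵥ (F12 *ᵥ u2) = 0 := by
    refine ⟨v2 + (0:ℂ) • e21 + (-(u1 ⬝ᵥ (F12 *ᵥ v2)) / (u1 ⬝ᵥ (F12 *ᵥ e23))) • e23, ?_, ?_⟩
    · rw [hdet]; exact hv2
    · simp only [Matrix.mulVec_add, Matrix.mulVec_smul, dotProduct_add, dotProduct_smul, smul_eq_mul]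
      field_simp
      ring
  have nζ2 := nζ u2 hu2
  obtain ⟨u3, hu3, z13, z23⟩ : ∃ u3, (Matrix.of ![e31, e32, u3]).det ≠ 0 ∧ u1 ⬝ᵥ (F13 *ᵥ u3) = 0 ∧
      u2 ⬝ᵥ (F23 *ᵥ u3) = 0 := by
    refine ⟨v3 + (-(u2 ⬝ᵥ (F23 *ᵥ v3)) / (u2 ⬝ᵥ (F23 *ᵥ e31))) • e31
      + (-(u1 ⬝ᵥ (F13 *ᵥ v3)) / (u1 ⬝ᵥ (F13 *ᵥ e32))) • e32, ?_, ?_, ?_⟩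
    · rw [hdet]; exact hv3
    · simp only [Matrix.mulVec_add, Matrix.mulVec_smul, dotProduct_add, dotProduct_smul, smul_eq_mul, hk31,
        dotProduct_zero]
      field_simp
      ring
    · simp only [Matrix.mulVec_add, Matrix.mulVec_smul, dotProduct_add, dotProduct_smul, smul_eq_mul, hk32,
        dotProduct_zero]
      field_simp
      ring
  have nα2 := nα u2 hu2
  have nγ3 := nγ u3 hu3
  have nε3 := nε u3 hu3
  obtain ⟨q2, hq2⟩ : ∃ q2, q2 * (u1 ⬝ᵥ (F12 *ᵥ e23)) = -(e13 ⬝ᵥ (F12 *ᵥ u2)) :=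
    ⟨_, div_mul_cancel₀ _ nβ⟩
  obtain ⟨q3, hq3⟩ : ∃ q3, q3 * (u1 ⬝ᵥ (F13 *ᵥ e32)) = (e12 ⬝ᵥ (F13 *ᵥ u3)) :=
    ⟨_, div_mul_cancel₀ _ nδ⟩
  obtain ⟨p3, hp3⟩ : ∃ p3, p3 * (u2 ⬝ᵥ (F23 *ᵥ e31)) = -(e21 ⬝ᵥ (F23 *ᵥ u3)) :=
    ⟨_, div_mul_cancel₀ _ nζ2⟩
  have q20 : q2 ≠ 0 := by rintro rfl; rw [zero_mul] at hq2; exact nα2 (neg_eq_zero.1 hq2.symm)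
  have q30 : q3 ≠ 0 := by rintro rfl; rw [zero_mul] at hq3; exact nγ3 hq3.symm
  have p30 : p3 ≠ 0 := by rintro rfl; rw [zero_mul] at hp3; exact nε3 (neg_eq_zero.1 hp3.symm)
  refine ⟨![(Matrix.of ![e12, e13, u1])ᵀ, (Matrix.of ![e21, e21 + q2 • e23, u2])ᵀ,
    (Matrix.of ![p3 • e31 - q3 • e32, p3 • e31, u3])ᵀ], ![0, ![1,0,0], ![0,1,0]],
    -(e13 ⬝ᵥ (F12 *ᵥ u2)), e12 ⬝ᵥ (F13 *ᵥ u3), e21 ⬝ᵥ (F23 *ᵥ u3), ?_, neg_ne_zero.2 nα2, nγ3, nε3, ?_, ?_, ?_⟩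
  · intro i
    rw [isUnit_iff_ne_zero]
    fin_cases i
    · simpa [Matrix.det_transpose] using hu1
    · have : (Matrix.of ![e21, e21 + q2 • e23, u2]).det = q2 * (Matrix.of ![e21, e23, u2]).det := by
        simp [Matrix.det_fin_three]; ring
      simp only [Fin.mk_one, Matrix.cons_val_one, Matrix.cons_val_zero, Matrix.det_transpose, this]
      exact mul_ne_zero q20 hu2
    · have : (Matrix.of ![p3 • e31 - q3 • e32, p3 • e31, u3]).det = p3 * q3 * (Matrix.of ![e31, e32, u3]).det := by
        simp [Matrix.det_fin_three]; ring
      simp only [Fin.reduceFinMk, Matrix.cons_val, Matrix.det_transpose, this]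
      exact mul_ne_zero (mul_ne_zero p30 q30) hu3
  · simp only [Matrix.cons_val, Matrix.transpose_transpose]
    ext i j
    rw [aux_entry]
    fin_cases i <;> fin_cases j <;>
      simp [crossMat, Matrix.mulVec_add, Matrix.mulVec_sub, Matrix.mulVec_smul, L12, hk21, t1, z12, hq2]
  · simp only [Matrix.cons_val, Matrix.transpose_transpose]
    ext i j
    rw [aux_entry]
    fin_cases i <;> fin_cases j <;>
      simp [crossMat, Matrix.mulVec_add, Matrix.mulVec_sub, Matrix.mulVec_smul, L13, hk31, t2, z13, hq3]
  · simp only [Matrix.cons_val, Matrix.transpose_transpose]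
    ext i j
    rw [aux_entry]
    fin_cases i <;> fin_cases j <;>
      simp [crossMat, Matrix.mulVec_add, Matrix.mulVec_sub, Matrix.mulVec_smul, L23, hk32, t3, z23, hp3]

/-- Proposition 2.1 (Hartley–Zisserman, Thm 15.6): a triple of rank-2 matrices whose
epipoles satisfy the noncollinearity conditions is a compatible fundamental matrix
triple if and only if the three triangulation conditions hold.
Indices are 0-based: camera `i+1` of the paper is camera `i` here, and
`Matrix.BlockTriangular K id` expresses that `K` is upper triangular. -/
theorem stmt19 (F12 F13 F23 : Matrix (Fin 3) (Fin 3) ℂ)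
    (h12 : F12.rank = 2) (h13 : F13.rank = 2) (h23 : F23.rank = 2)
    (e21 e12 e31 e13 e32 e23 : Fin 3 → ℂ)
    (hne21 : e21 ≠ 0) (hne12 : e12 ≠ 0) (hne31 : e31 ≠ 0)
    (hne13 : e13 ≠ 0) (hne32 : e32 ≠ 0) (hne23 : e23 ≠ 0)
    (hk21 : F12 *ᵥ e21 = 0) (hk12 : F12ᵀ *ᵥ e12 = 0)
    (hk31 : F13 *ᵥ e31 = 0) (hk13 : F13ᵀ *ᵥ e13 = 0)
    (hk32 : F23 *ᵥ e32 = 0) (hk23 : F23ᵀ *ᵥ e23 = 0)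
    (hli1 : LinearIndependent ℂ ![e12, e13])
    (hli2 : LinearIndependent ℂ ![e21, e23])
    (hli3 : LinearIndependent ℂ ![e31, e32]) :
    (e13 ⬝ᵥ (F12 *ᵥ e23) = 0 ∧ e12 ⬝ᵥ (F13 *ᵥ e32) = 0 ∧
      e21 ⬝ᵥ (F23 *ᵥ e31) = 0) ↔
    (∃ (K R : Fin 3 → Matrix (Fin 3) (Fin 3) ℂ) (c : Fin 3 → Fin 3 → ℂ)
        (l12 l13 l23 : ℂ),
      (∀ i, (K i).BlockTriangular id) ∧ (∀ i, IsUnit (K i).det) ∧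
      (∀ i, R i * (R i)ᵀ = 1) ∧ (∀ i, (R i).det = 1) ∧
      l12 ≠ 0 ∧ l13 ≠ 0 ∧ l23 ≠ 0 ∧
      F12 = l12 • (((K 0)⁻¹)ᵀ * R 0 * crossMat (c 1 - c 0) * (R 1)ᵀ * (K 1)⁻¹) ∧
      F13 = l13 • (((K 0)⁻¹)ᵀ * R 0 * crossMat (c 2 - c 0) * (R 2)ᵀ * (K 2)⁻¹) ∧
      F23 = l23 • (((K 1)⁻¹)ᵀ * R 1 * crossMat (c 2 - c 1) * (R 2)ᵀ * (K 2)⁻¹)) := by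
  constructor
  · rintro ⟨t1, t2, t3⟩
    obtain ⟨A, c, l12, l13, l23, hA, n12, n13, n23, E12, E13, E23⟩ := aux_core F12 F13 F23 h12 h13 h23
      e21 e12 e31 e13 e32 e23 hk21 hk12 hk31 hk13 hk32 hk23 hli1 hli2 hli3 t1 t2 t3
    obtain ⟨K, R, G, hK, hKu, hR, hRd, hG, hAG⟩ := aux_calib A hA
    have hG0 := isUnit_iff_ne_zero.1 hG
    refine ⟨K, R, fun i => G⁻¹ *ᵥ c i, l12 * G.det, l13 * G.det, l23 * G.det, hK, hKu, hR, hRd,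
      mul_ne_zero n12 hG0, mul_ne_zero n13 hG0, mul_ne_zero n23 hG0, ?_, ?_, ?_⟩
    · exact aux_form _ _ _ _ _ _ _ _ _ _ _ (hA 0) (hA 1) hG (hKu 0) (hKu 1) (hR 0) (hR 1) (hAG 0) (hAG 1) E12
    · exact aux_form _ _ _ _ _ _ _ _ _ _ _ (hA 0) (hA 2) hG (hKu 0) (hKu 2) (hR 0) (hR 2) (hAG 0) (hAG 2) E13
    · exact aux_form _ _ _ _ _ _ _ _ _ _ _ (hA 1) (hA 2) hG (hKu 1) (hKu 2) (hR 1) (hR 2) (hAG 1) (hAG 2) E23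
  · rintro ⟨K, R, c, l12, l13, l23, hK, hKu, hR, hRd, n12, n13, n23, E12, E13, E23⟩
    obtain ⟨B, hB⟩ : ∃ B : Fin 3 → Matrix (Fin 3) (Fin 3) ℂ, ∀ i, B i = (R i)ᵀ * (K i)⁻¹ := ⟨_, fun _ => rfl⟩
    have hBu : ∀ i, IsUnit (B i).det := by
      intro i
      rw [hB, Matrix.det_mul, Matrix.det_transpose, hRd, one_mul]
      exact Matrix.isUnit_nonsing_inv_det _ (hKu i)
    have conv : ∀ i j v, ((K i)⁻¹)ᵀ * R i * crossMat v * (R j)ᵀ * (K j)⁻¹ = (B i)ᵀ * crossMat v * B j := by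
      intro i j v
      rw [hB, hB, Matrix.transpose_mul, Matrix.transpose_transpose]
      simp only [Matrix.mul_assoc]
    rw [conv] at E12 E13 E23
    obtain ⟨k12, k12'⟩ := aux_epi _ _ _ _ _ h12 (hBu 0) (hBu 1) n12 E12
    obtain ⟨k13, k13'⟩ := aux_epi _ _ _ _ _ h13 (hBu 0) (hBu 2) n13 E13
    obtain ⟨k23, k23'⟩ := aux_epi _ _ _ _ _ h23 (hBu 1) (hBu 2) n23 E23
    obtain ⟨s21, g21⟩ := k12 _ hk21
    obtain ⟨s12, g12⟩ := k12' _ hk12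
    obtain ⟨s31, g31⟩ := k13 _ hk31
    obtain ⟨s13, g13⟩ := k13' _ hk13
    obtain ⟨s32, g32⟩ := k23 _ hk32
    obtain ⟨s23, g23⟩ := k23' _ hk23
    refine ⟨?_, ?_, ?_⟩
    · rw [aux_trip _ _ _ _ _ _ _ E12, g13, g23]
      simp [crossMat, Matrix.mulVec, dotProduct, Fin.sum_univ_three]
      right; ring
    · rw [aux_trip _ _ _ _ _ _ _ E13, g12, g32]
      simp [crossMat, Matrix.mulVec, dotProduct, Fin.sum_univ_three]
      right; ring
    · rw [aux_trip _ _ _ _ _ _ _ E23, g21, g31]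
      simp [crossMat, Matrix.mulVec, dotProduct, Fin.sum_univ_three]
      right; ring
end
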